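/- (I) Let M, a > 0 and let η ∈ L^∞(ℝ^N) satisfy 0 ≤ η(x) ≤ M e^{−a|x|²} for a.e. x ∈ ℝ^N. Then for every t > 0 and x ∈ ℝ^N: 0 ≤ ℍ[η](x,t) ≤ M (4at+1)^{−N/2} e^{−a|x|²/(4at+1)}. (II) Let M, a, b > 0; then there exists C = C(N,a,b) > 0 such that if η ∈ L^∞(ℝ^N) satisfies 0 ≤ η(x) ≤ M e^{−a((|x|−b)₊)²} for a.e. x, then 0 ≤ ℍ[η](x,t) ≤ C M (4at+1)^{−N/2} e^{−a((|x|−b)₊)²/(4at+1)} for every t > 0 and x ∈ ℝ^N, where (r)₊ = max{r,0}. -/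

import Mathlib

open MeasureTheory Real Set Filter Metric

noncomputable section

abbrev Euc (N : ℕ) := EuclideanSpace ℝ (Fin N)

/-- Spatial Laplacian of `f : ℝ^N → ℝ`. -/
def lapl {N : ℕ} (f : Euc N → ℝ) (x : Euc N) : ℝ :=
  ∑ i : Fin N,
    fderiv ℝ (fun y => fderiv ℝ f y (EuclideanSpace.single i 1)) x (EuclideanSpace.single i 1)

/-- The capacity `C_{2/q,q'}` of a set `A ⊆ ℝ^N`. -/
def capQ (N : ℕ) (q : ℝ) (A : Set (Euc N)) : ℝ :=
  sInf { c : ℝ | ∃ φ : Euc N → ℝ, ContDiff ℝ (⊤ : ℕ∞) φ ∧ HasCompactSupport φ ∧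
      (∃ U : Set (Euc N), IsOpen U ∧ A ⊆ U ∧ ∀ x ∈ U, 1 ≤ φ x) ∧
      c = (∫ x, φ x ^ (q / (q - 1))) +
          ∫ x, ∫ y, |φ x - φ y| ^ (q / (q - 1)) / ‖x - y‖ ^ ((N : ℝ) + 2 / (q - 1)) }

/-- The spherical shell piece `F_n` of `F` around `x` at time `t`. -/
def shell (N : ℕ) (F : Set (Euc N)) (x : Euc N) (t : ℝ) (n : ℕ) : Set (Euc N) :=
  {y | y ∈ F ∧ Real.sqrt ((n : ℝ) * t) ≤ dist x y ∧ dist x y ≤ Real.sqrt (((n : ℝ) + 1) * t)}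

/-- The parabolic capacitary potential `W_F`. -/
def Wpot (N : ℕ) (q : ℝ) (F : Set (Euc N)) (x : Euc N) (t : ℝ) : ℝ :=
  t ^ (-(N : ℝ) / 2) *
    ∑' n : ℕ,
      Real.sqrt (((n : ℝ) + 1) * t) ^ ((N : ℝ) - 2 / (q - 1)) * Real.exp (-(n : ℝ) / 4) *
        capQ N q ((fun y => (Real.sqrt (((n : ℝ) + 1) * t))⁻¹ • y) '' shell N F x t n)

/-- `u` is a positive solution of `∂ₜu - Δu + u^q = 0` in `Q_∞` whose initial
trace vanishes outside the closed set `F`. -/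
def IsSol (N : ℕ) (q : ℝ) (u : Euc N → ℝ → ℝ) (F : Set (Euc N)) : Prop :=
  ContDiffOn ℝ 2 (fun p : Euc N × ℝ => u p.1 p.2) (Set.univ ×ˢ Set.Ioi (0 : ℝ)) ∧
  (∀ x t, 0 < t → 0 < u x t) ∧
  (∀ x t, 0 < t → deriv (u x) t - lapl (fun y => u y t) x + u x t ^ q = 0) ∧
  (∀ E : Set (Euc N), IsCompact E → E ⊆ Fᶜ →
    Tendsto (fun t => sSup ((fun x => u x t) '' E)) (nhdsWithin 0 (Set.Ioi 0)) (nhds 0))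

/-- The heat potential of a function. -/
def heatPot (N : ℕ) (η : Euc N → ℝ) (x : Euc N) (t : ℝ) : ℝ :=
  ∫ y, (4 * π * t) ^ (-(N : ℝ) / 2) * Real.exp (-‖x - y‖ ^ 2 / (4 * t)) * η y

/-- The heat potential of a measure. -/
def heatPotM (N : ℕ) (μ : Measure (Euc N)) (x : Euc N) (t : ℝ) : ℝ :=
  ∫ y, (4 * π * t) ^ (-(N : ℝ) / 2) * Real.exp (-‖x - y‖ ^ 2 / (4 * t)) ∂μ

/-- The class `𝒯_{r,ρ}(K)` of test functions. -/
def TestFun (N : ℕ) (r ρ : ℝ) (K : Set (Euc N)) (η : Euc N → ℝ) : Prop :=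
  ContDiff ℝ (⊤ : ℕ∞) η ∧ HasCompactSupport η ∧ tsupport η ⊆ Metric.ball (0 : Euc N) (r + ρ) ∧
  (∀ x, 0 ≤ η x ∧ η x ≤ 1) ∧ (∀ x ∈ K, η x = 1)

/-- `‖R[η]‖_{L^{q'}}^{q'} = ∬_{Q_∞} (|∇ℍ[η]|² + |∂ₜℍ[η]|)^{q'} dx dt`. -/
def Rnorm (N : ℕ) (q : ℝ) (η : Euc N → ℝ) : ℝ :=
  ∫ t in Set.Ioi (0 : ℝ), ∫ x,
    (‖fderiv ℝ (fun y => heatPot N η y t) x‖ ^ 2 +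
      |deriv (fun τ => heatPot N η x τ) t|) ^ (q / (q - 1))

/-!
Both bounds are instances of one about a nonempty set `K` inside a ball of radius `b`, with the
Gaussian of the distance to `K` as the bound on the data: take `K = {0}`, `b = 0` for (I) and the
ball itself for (II).

Let `z` be a point of `closure K` nearest to `y`. Completing the square in
`‖x - y‖² / (4t) + a ‖y - z‖²` splits off `a ‖x - z‖² / (4at + 1)`, which is at least
`a d(x, K)² / (4at + 1)`, and leaves a Gaussian centred at a convex combination of `z` and `x`.
Moving `z` to the centre of the ball makes this centre independent of `y`, and since `z` has weight
`4at / (4at + 1)` in the combination, the move costs a factor depending only on `ε = b √a`: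
`exp ε` in size and `1 + ε` in variance. Integrating gives the constant `(1 + ε) ^ (N / 2) * exp ε`,
which is `1` when `b = 0`.
-/

section Geometry

lemma sq_le_one_add_mul_sq_add {r s ε : ℝ} (hr : 0 ≤ r) (hε : 0 ≤ ε) (h : r ≤ s + ε) :
    r ^ 2 ≤ (1 + ε) * (s ^ 2 + ε) := by
  have amgm : 2 * s ≤ s ^ 2 + 1 := by linarith [sq_nonneg (s - 1)]
  calc r ^ 2 ≤ (s + ε) ^ 2 := pow_le_pow_left₀ hr h 2
    _ = s ^ 2 + ε * (2 * s) + ε ^ 2 := by ring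
    _ ≤ s ^ 2 + ε * (s ^ 2 + 1) + ε ^ 2 := by gcongr
    _ = (1 + ε) * (s ^ 2 + ε) := by ring

lemma sqrt_add_mul_div_le_sqrt {α β : ℝ} (hα : 0 ≤ α) (hβ : 0 < β) :
    √(α + β) * (β / (α + β)) ≤ √β :=
  calc √(α + β) * (β / (α + β)) = β / √(α + β) := by
        rw [mul_div_left_comm, sqrt_div_self', mul_one_div]
    _ ≤ β / √β := by gcongr; linarith
    _ = √β := div_sqrt

lemma infDist_closedBall {E : Type*} [SeminormedAddCommGroup E] [NormedSpace ℝ E] {b : ℝ}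
    (hb : 0 ≤ b) (c x : E) : infDist x (closedBall c b) = max (dist x c - b) 0 := by
  have hne : (closedBall c b).Nonempty := nonempty_closedBall.2 hb
  apply le_antisymm
  · rcases le_or_gt (dist x c) b with h | h
    · rw [infDist_zero_of_mem (mem_closedBall.2 h)]
      exact le_max_right _ _
    · rw [dist_comm] at h
      have hd : 0 < dist c x := hb.trans_lt h
      have hratio : b / dist c x ≤ 1 := (div_le_one hd).2 h.le
      have hmem : AffineMap.lineMap c x (b / dist c x) ∈ closedBall c b := by
        rw [mem_closedBall, dist_lineMap_left, norm_of_nonneg (by positivity),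
          div_mul_cancel₀ _ hd.ne']
      refine (infDist_le_dist_of_mem hmem).trans (le_max_of_le_left (le_of_eq ?_))
      rw [dist_right_lineMap, norm_of_nonneg (by linarith), sub_mul, one_mul,
        div_mul_cancel₀ _ hd.ne', dist_comm]
  · refine max_le ((le_infDist hne).2 fun y hy => ?_) infDist_nonneg
    linarith [dist_triangle x y c, mem_closedBall.1 hy]

lemma dist_lineMap_left_le {E : Type*} [SeminormedAddCommGroup E] [NormedSpace ℝ E] {θ : ℝ}
    (hθ : θ ≤ 1) (x y z c : E) :
    dist y (AffineMap.lineMap c x θ) ≤ dist y (AffineMap.lineMap z x θ) + (1 - θ) * dist z c := by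
  have hzc : dist (AffineMap.lineMap z x θ) (AffineMap.lineMap c x θ) = (1 - θ) * dist z c := by
    rw [AffineMap.lineMap_apply_module, AffineMap.lineMap_apply_module, dist_add_right,
      dist_smul₀, norm_of_nonneg (by linarith)]
  exact hzc ▸ dist_triangle _ _ _

variable {E : Type*} [NormedAddCommGroup E] [InnerProductSpace ℝ E] {α β : ℝ}

lemma mul_sq_dist_add_mul_sq_dist (h : α + β ≠ 0) (x y z : E) :
    α * dist x y ^ 2 + β * dist y z ^ 2 =
      α * β / (α + β) * dist x z ^ 2 +
        (α + β) * dist y (AffineMap.lineMap z x (α / (α + β))) ^ 2 := by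
  have hxy : x - y = (x - z) - (y - z) := by abel
  have hm : y - AffineMap.lineMap z x (α / (α + β)) = (y - z) - (α / (α + β)) • (x - z) := by
    rw [AffineMap.lineMap_apply_module']; abel
  simp only [dist_eq_norm]
  rw [hm, hxy, norm_sub_sq_real (x - z), norm_sub_sq_real (y - z), norm_smul, mul_pow, norm_eq_abs,
    sq_abs, inner_smul_right, real_inner_comm]
  field_simp
  ring

lemma le_mul_sq_dist_add_mul_sq_infDist [ProperSpace E] (hα : 0 < α) (hβ : 0 < β) {b : ℝ}
    {K : Set E} {c : E} (hK : K.Nonempty) (hKb : K ⊆ closedBall c b) (x y : E) :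
    α * β / (α + β) * infDist x K ^ 2 +
        (α + β) / (1 + b * √β) * dist y (AffineMap.lineMap c x (α / (α + β))) ^ 2 - b * √β ≤
      α * dist x y ^ 2 + β * infDist y K ^ 2 := by
  have hσ : 0 < α + β := by positivity
  have hb : 0 ≤ b := nonempty_closedBall.1 (hK.mono hKb)
  have hθ : 1 - α / (α + β) = β / (α + β) := by field_simp; ring
  obtain ⟨z, hzK, hyz⟩ := isClosed_closure.exists_infDist_eq_dist hK.closure y
  rw [infDist_closure] at hyz
  have hzc : dist z c ≤ b := closure_minimal hKb isClosed_closedBall hzK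
  have hxz : infDist x K ≤ dist x z := infDist_closure (s := K) ▸ infDist_le_dist_of_mem hzK
  set r := dist y (AffineMap.lineMap c x (α / (α + β)))
  set s := dist y (AffineMap.lineMap z x (α / (α + β)))
  have hrs : √(α + β) * r ≤ √(α + β) * s + b * √β :=
    calc √(α + β) * r ≤ √(α + β) * (s + β / (α + β) * b) := by
          gcongr
          refine (dist_lineMap_left_le ((div_le_one hσ).2 (by linarith)) x y z c).trans ?_
          rw [hθ]
          gcongr
      _ = √(α + β) * s + b * (√(α + β) * (β / (α + β))) := by ring
      _ ≤ √(α + β) * s + b * √β := by gcongr; exact sqrt_add_mul_div_le_sqrt hα.le hβ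
  have hr : (α + β) / (1 + b * √β) * r ^ 2 ≤ (α + β) * s ^ 2 + b * √β := by
    have := sq_le_one_add_mul_sq_add (by positivity) (by positivity) hrs
    rw [mul_pow, mul_pow, sq_sqrt hσ.le] at this
    rwa [div_mul_eq_mul_div, div_le_iff₀' (by positivity)]
  rw [hyz, mul_sq_dist_add_mul_sq_dist hσ.ne' x y z]
  have : α * β / (α + β) * infDist x K ^ 2 ≤ α * β / (α + β) * dist x z ^ 2 := by
    gcongr
    exact infDist_nonneg
  linarith

end Geometry

section HeatKernel

variable {E : Type*} [NormedAddCommGroup E] [Module ℝ E]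

/-- The heat kernel `(4πt)^{-n/2} exp (-‖z‖² / (4t))` of an `n`-dimensional space, so that the heat
potential of `η` at `(x, t)` is `∫ y, heatKernel t (x - y) * η y`. -/
def heatKernel (t : ℝ) (z : E) : ℝ :=
  (4 * π * t) ^ (-(Module.finrank ℝ E : ℝ) / 2) * exp (-‖z‖ ^ 2 / (4 * t))

lemma heatKernel_nonneg {t : ℝ} (ht : 0 ≤ t) (z : E) : 0 ≤ heatKernel t z := by
  unfold heatKernel
  positivity

lemma continuous_heatKernel (t : ℝ) : Continuous (heatKernel t : E → ℝ) := by
  unfold heatKernel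
  fun_prop

lemma heatKernel_mul_exp_neg_sq_infDist_le {E : Type*} [NormedAddCommGroup E]
    [InnerProductSpace ℝ E] [ProperSpace E] {a b t : ℝ} {K : Set E} {c : E}
    (ha : 0 < a) (ht : 0 < t) (hK : K.Nonempty) (hKb : K ⊆ closedBall c b) (x y : E) :
    heatKernel t (x - y) * exp (-a * infDist y K ^ 2) ≤
      (4 * π * t) ^ (-(Module.finrank ℝ E : ℝ) / 2) *
        (exp (b * √a) * exp (-a * infDist x K ^ 2 / (4 * a * t + 1))) *
        exp (-(((4 * t)⁻¹ + a) / (1 + b * √a)) *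
          dist y (AffineMap.lineMap c x ((4 * t)⁻¹ / ((4 * t)⁻¹ + a))) ^ 2) := by
  have hexponent := le_mul_sq_dist_add_mul_sq_infDist (inv_pos.2 (by positivity : 0 < 4 * t)) ha
    hK hKb x y
  have hcoeff : (4 * t)⁻¹ * a / ((4 * t)⁻¹ + a) * infDist x K ^ 2 =
      a * infDist x K ^ 2 / (4 * a * t + 1) := by
    field_simp
    ring
  rw [heatKernel, mul_assoc, ← exp_add, ← exp_add, mul_assoc (_ ^ _) (exp _), ← exp_add]
  refine mul_le_mul_of_nonneg_left (exp_le_exp.2 ?_) (by positivity)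
  rw [← dist_eq_norm, neg_mul, neg_div, neg_mul, neg_mul, neg_div, div_eq_inv_mul _ (4 * t)]
  linarith

end HeatKernel

section GaussianBound

variable {E : Type*} [NormedAddCommGroup E] [InnerProductSpace ℝ E] [FiniteDimensional ℝ E]
  [MeasurableSpace E] [BorelSpace E]

lemma integral_exp_neg_mul_sq_dist {σ : ℝ} (hσ : 0 < σ) (m : E) :
    ∫ y, exp (-σ * dist y m ^ 2) = (π / σ) ^ ((Module.finrank ℝ E : ℝ) / 2) := by
  simp only [dist_eq_norm]
  rw [integral_sub_right_eq_self (fun y : E => exp (-σ * ‖y‖ ^ 2)) m,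
    GaussianFourier.integral_rexp_neg_mul_sq_norm hσ]

lemma integrable_exp_neg_mul_sq_dist {σ : ℝ} (hσ : 0 < σ) (m : E) :
    Integrable fun y => exp (-σ * dist y m ^ 2) :=
  .of_integral_ne_zero <| by
    rw [integral_exp_neg_mul_sq_dist hσ m]
    positivity

lemma integrable_and_integral_le_of_le_exp_neg_mul_sq_dist {f : E → ℝ} {B σ : ℝ} {m : E}
    (hσ : 0 < σ) (hfm : AEStronglyMeasurable f) (hf : 0 ≤ᵐ[volume] f)
    (hle : ∀ᵐ y, f y ≤ B * exp (-σ * dist y m ^ 2)) :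
    Integrable f ∧ ∫ y, f y ≤ B * (π / σ) ^ ((Module.finrank ℝ E : ℝ) / 2) := by
  have hgauss := (integrable_exp_neg_mul_sq_dist hσ m).const_mul B
  have hint : Integrable f := hgauss.mono' hfm <| by
    filter_upwards [hf, hle] with y h0 h1
    rwa [norm_of_nonneg h0]
  refine ⟨hint, (integral_mono_ae hint hgauss hle).trans_eq ?_⟩
  rw [integral_const_mul, integral_exp_neg_mul_sq_dist hσ]

lemma rpow_neg_mul_rpow_pi_div {a t κ : ℝ} (ha : 0 ≤ a) (ht : 0 < t) (hκ : 0 ≤ κ) (p : ℝ) :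
    (4 * π * t) ^ (-p) * (π / (((4 * t)⁻¹ + a) / κ)) ^ p = κ ^ p * (4 * a * t + 1) ^ (-p) := by
  have hvar : π / (((4 * t)⁻¹ + a) / κ) = 4 * π * t * (κ / (4 * a * t + 1)) := by
    field_simp
    ring
  have hden : 0 < 4 * π * t := by positivity
  have hl : 0 ≤ 4 * a * t + 1 := by positivity
  rw [hvar, mul_rpow hden.le (by positivity), ← mul_assoc, ← rpow_add hden, neg_add_cancel,
    rpow_zero, one_mul, div_rpow hκ hl, rpow_neg hl, div_eq_mul_inv]

theorem stmt13_general {a b t M : ℝ} {K : Set E} {c : E} {η : E → ℝ} (ha : 0 < a) (ht : 0 < t)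
    (hK : K.Nonempty) (hKb : K ⊆ closedBall c b) (hηm : AEStronglyMeasurable η)
    (hη : ∀ᵐ y, 0 ≤ η y ∧ η y ≤ M * exp (-a * infDist y K ^ 2)) (x : E) :
    Integrable (fun y => heatKernel t (x - y) * η y) ∧
      0 ≤ ∫ y, heatKernel t (x - y) * η y ∧
      ∫ y, heatKernel t (x - y) * η y ≤
        (1 + b * √a) ^ ((Module.finrank ℝ E : ℝ) / 2) * exp (b * √a) * M *
          (4 * a * t + 1) ^ (-(Module.finrank ℝ E : ℝ) / 2) *
          exp (-a * infDist x K ^ 2 / (4 * a * t + 1)) := by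
  have hb : 0 ≤ b := nonempty_closedBall.1 (hK.mono hKb)
  have hM : 0 ≤ M := by
    obtain ⟨y, hy⟩ := hη.exists
    exact nonneg_of_mul_nonneg_left (hy.1.trans hy.2) (exp_pos _)
  set A := (4 * π * t) ^ (-(Module.finrank ℝ E : ℝ) / 2) *
    (exp (b * √a) * exp (-a * infDist x K ^ 2 / (4 * a * t + 1))) with hA
  set σ := ((4 * t)⁻¹ + a) / (1 + b * √a) with hσ_def
  set m := AffineMap.lineMap c x ((4 * t)⁻¹ / ((4 * t)⁻¹ + a))
  have hσ : 0 < σ := by positivity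
  have hnonneg : ∀ᵐ y, 0 ≤ heatKernel t (x - y) * η y :=
    hη.mono fun y hy => mul_nonneg (heatKernel_nonneg ht.le _) hy.1
  have hle : ∀ᵐ y, heatKernel t (x - y) * η y ≤ M * A * exp (-σ * dist y m ^ 2) := by
    filter_upwards [hη] with y hy
    calc heatKernel t (x - y) * η y
        ≤ heatKernel t (x - y) * (M * exp (-a * infDist y K ^ 2)) := by
          gcongr
          exacts [heatKernel_nonneg ht.le _, hy.2]
      _ = M * (heatKernel t (x - y) * exp (-a * infDist y K ^ 2)) := by ring
      _ ≤ M * (A * exp (-σ * dist y m ^ 2)) :=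
          mul_le_mul_of_nonneg_left (heatKernel_mul_exp_neg_sq_infDist_le ha ht hK hKb x y) hM
      _ = M * A * exp (-σ * dist y m ^ 2) := (mul_assoc _ _ _).symm
  have hmeas : AEStronglyMeasurable fun y => heatKernel t (x - y) * η y :=
    ((continuous_heatKernel t).comp (by fun_prop)).aestronglyMeasurable.mul hηm
  obtain ⟨hint, hbound⟩ :=
    integrable_and_integral_le_of_le_exp_neg_mul_sq_dist hσ hmeas hnonneg hle
  refine ⟨hint, integral_nonneg_of_ae hnonneg, hbound.trans_eq ?_⟩
  have hconst := rpow_neg_mul_rpow_pi_div ha.le ht (by positivity : 0 ≤ 1 + b * √a)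
    ((Module.finrank ℝ E : ℝ) / 2)
  rw [← hσ_def] at hconst
  rw [hA, neg_div]
  linear_combination
    M * (exp (b * √a) * exp (-a * infDist x K ^ 2 / (4 * a * t + 1))) * hconst

end GaussianBound

lemma heatPot_eq_integral_heatKernel (N : ℕ) (η : Euc N → ℝ) (x : Euc N) (t : ℝ) :
    heatPot N η x t = ∫ y, heatKernel t (x - y) * η y := by
  simp only [heatPot, heatKernel, finrank_euclideanSpace_fin]

/-- Lemma 2.16: Gaussian upper bounds propagated by the heat potential. -/
theorem stmt13 (N : ℕ) :
    (∀ M a : ℝ, 0 < M → 0 < a →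
      ∀ η : Euc N → ℝ, Measurable η →
        (∀ᵐ x : Euc N, 0 ≤ η x ∧ η x ≤ M * Real.exp (-a * ‖x‖ ^ 2)) →
        ∀ (x : Euc N) (t : ℝ), 0 < t →
          0 ≤ heatPot N η x t ∧
            heatPot N η x t ≤
              M * (4 * a * t + 1) ^ (-(N : ℝ) / 2) *
                Real.exp (-a * ‖x‖ ^ 2 / (4 * a * t + 1))) ∧
    (∀ M a b : ℝ, 0 < M → 0 < a → 0 < b →
      ∃ C : ℝ, 0 < C ∧
        ∀ η : Euc N → ℝ, Measurable η →
          (∀ᵐ x : Euc N, 0 ≤ η x ∧ η x ≤ M * Real.exp (-a * max (‖x‖ - b) 0 ^ 2)) →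
          ∀ (x : Euc N) (t : ℝ), 0 < t →
            0 ≤ heatPot N η x t ∧
              heatPot N η x t ≤
                C * M * (4 * a * t + 1) ^ (-(N : ℝ) / 2) *
                  Real.exp (-a * max (‖x‖ - b) 0 ^ 2 / (4 * a * t + 1))) := by
  simp only [heatPot_eq_integral_heatKernel]
  refine ⟨fun M a _ ha η hηm hη x t ht => ?_, fun M a b _ ha hb =>
    ⟨(1 + b * √a) ^ ((N : ℝ) / 2) * exp (b * √a), by positivity, fun η hηm hη x t ht => ?_⟩⟩
  · have hdist (y : Euc N) : infDist y {0} = ‖y‖ := by rw [infDist_singleton, dist_zero_right]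
    simp only [← hdist] at hη ⊢
    have := (stmt13_general ha ht (singleton_nonempty 0) closedBall_zero.ge
      hηm.aestronglyMeasurable hη x).2
    rwa [finrank_euclideanSpace_fin, zero_mul, add_zero, one_rpow, exp_zero, one_mul, one_mul]
      at this
  · have hdist (y : Euc N) : max (‖y‖ - b) 0 = infDist y (closedBall 0 b) := by
      rw [infDist_closedBall hb.le, dist_zero_right]
    simp only [hdist] at hη ⊢
    have := (stmt13_general ha ht (nonempty_closedBall.2 hb.le) Subset.rfl
      hηm.aestronglyMeasurable hη x).2
    rwa [finrank_euclideanSpace_fin] at this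

end
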